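/- Let b₀∈ℝ, b₀≠0, and set h₃ = b₀(z³+z̄³). For m≥2 let H³_m be the real vector space of real-valued homogeneous polynomials of degree m in z,z̄ supported on monomials with exponents congruent mod 3, and define L₃: H³_m → H³_{m+1} by L₃(χ) = 2i{χ, h₃} = 6ib₀(z̄²∂χ/∂z − z²∂χ/∂z̄) (which indeed lands in H³_{m+1}). Then: (i) if m = 3k, the kernel of L₃ is the one-dimensional space ℝ·h₃ᵏ and L₃ is surjective onto H³_{3k+1}; (ii) if m ≢ 0 (mod 3), L₃ is injective and its image has real codimension 1 in H³_{m+1}, with H³_{m+1} = L₃(H³_m) ⊕ ℝ·g, where g = z^{(m+1)/2}z̄^{(m+1)/2} if m+1 is even, and g = z^{(m+4)/2}z̄^{(m−2)/2} + z^{(m−2)/2}z̄^{(m+4)/2} if m+1 is odd. -/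

import Mathlib

/-!
Up to the nonzero factor `6 i b₀`, the operator `L₃` is `D χ = z̄² ∂χ/∂z − z² ∂χ/∂z̄`. On coefficients,
`(D χ)_{k,l} = (k+1) χ_{k+1,l-2} − (l+1) χ_{k-2,l+1}`, a bidiagonal system along the monomials of
a given degree and residue class mod 3. Three facts carry the proof.

* Solving upwards in `k` (`sol`) gives a formal right inverse of `D`, except for the equations with
  `l ≤ 1`. In the relevant degree `m + 1` and residue class there is no such equation if `3 ∣ m`
  and exactly one otherwise. This yields surjectivity in the first case, and codimension at most
  one in the second.
* The same recursion preserves positivity (`nonneg_of_D`): if `χ` has no pure `z̄` power and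
  `D χ ≥ 0` coefficientwise, then `χ ≥ 0`. Exchanging `z` and `z̄` changes the sign of `D`, so if
  also `χ` has no pure `z` power, then `χ ≤ 0`. Hence `D χ ≥ 0` forces `χ = 0` when `3 ∤ m`
  (`eq_zero_of_D_nonneg`). This gives injectivity, and shows that no nonzero `g` with nonnegative
  coefficients is in the image.
* `D` commutes with multiplication by `h₃`, so `D h₃ᵏ = 0`; a kernel element is determined by its
  coefficient at `z̄ᵐ`, so the kernel is spanned by `h₃ᵏ`.

The real structure is recovered by averaging `χ` with its conjugate, since `L₃` commutes with
conjugation.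
-/

open Complex Finset Asymptotics

noncomputable section

/-- Formal power series in two commuting variables `z`, `z̄`,
represented by coefficient functions: `h k l` is the coefficient of `z^k z̄^l`. -/
abbrev FS2 : Type := ℕ → ℕ → ℂ

namespace FS2

/-- The constant series `1`. -/
def one : FS2 := fun k l => if k = 0 ∧ l = 0 then 1 else 0

/-- The monomial `z^a z̄^b`. -/
def mono (a b : ℕ) : FS2 := fun k l => if k = a ∧ l = b then 1 else 0

/-- Product of formal power series. -/
def mul (f g : FS2) : FS2 := fun k l =>
  ∑ p ∈ Finset.range (k + 1), ∑ q ∈ Finset.range (l + 1),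
    f p q * g (k - p) (l - q)

/-- Powers of a formal power series. -/
def npow (f : FS2) : ℕ → FS2
  | 0 => one
  | n + 1 => mul f (npow f n)

/-- `∂/∂z`. -/
def dz (f : FS2) : FS2 := fun k l => ((k : ℂ) + 1) * f (k + 1) l

/-- `∂/∂z̄`. -/
def dw (f : FS2) : FS2 := fun k l => ((l : ℂ) + 1) * f k (l + 1)

/-- Poisson bracket `{f,g} = (∂f/∂z)(∂g/∂z̄) − (∂f/∂z̄)(∂g/∂z)`. -/
def pb (f g : FS2) : FS2 := mul (dz f) (dw g) - mul (dw f) (dz g)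

/-- Lie derivative `L_χ g = −2i {g, χ}`. -/
def lie (χ g : FS2) : FS2 := (-2 * Complex.I) • pb g χ

/-- Iterated Lie derivative `L_χ^n g`. -/
def lieIter (χ : FS2) : ℕ → FS2 → FS2
  | 0, g => g
  | n + 1, g => lie χ (lieIter χ n g)

/-- `exp(L_χ) g = Σ_{j≥0} (1/j!) L_χ^j g`.  When `χ` has no terms of total degree
`< 3`, the coefficient of `z^k z̄^l` in `L_χ^j g` vanishes for `j > k + l`, so the
truncated sum below computes the formal exponential exactly. -/
def expLie (χ g : FS2) : FS2 := fun k l =>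
  ∑ j ∈ Finset.range (k + l + 1), ((j.factorial : ℂ))⁻¹ * lieIter χ j g k l

/-- A series is real-valued: `h_{kl} = conj h_{lk}`. -/
def IsReal (h : FS2) : Prop := ∀ k l, h k l = (starRingEnd ℂ) (h l k)

/-- A pair of series has the real symmetry: `f̄_{kl} = conj f_{lk}`. -/
def RealPair (f fb : FS2) : Prop := ∀ k l, fb k l = (starRingEnd ℂ) (f l k)

/-- A pair is area-preserving: the formal Jacobian determinant equals `1`. -/
def UnitJacobian (f fb : FS2) : Prop :=
  mul (dz f) (dw fb) - mul (dw f) (dz fb) = one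

/-- No terms of total degree `< 3`. -/
def Ord3 (h : FS2) : Prop := ∀ k l, k + l < 3 → h k l = 0

/-- The rotated series `h(e^{iθ} z, e^{-iθ} z̄)`. -/
def rot (θ : ℝ) (h : FS2) : FS2 := fun k l =>
  Complex.exp (Complex.I * θ * ((k : ℂ) - (l : ℂ))) * h k l

/-- Substitution of the pair `(φ, φb)` into `g`, i.e. `g(φ(z,z̄), φb(z,z̄))`.
When `φ, φb` have zero constant term, the coefficient of `z^k z̄^l` in
`φ^a φb^b` vanishes for `a + b > k + l`, so the truncated sum below computes
the substitution exactly. -/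
def subst (φ φb : FS2) (g : FS2) : FS2 := fun k l =>
  ∑ a ∈ Finset.range (k + l + 1), ∑ b ∈ Finset.range (k + l + 1),
    g a b * mul (npow φ a) (npow φb b) k l

end FS2

/-- The series `(zz̄)² A(zz̄) + (zⁿ + z̄ⁿ) B(z²z̄²)`. -/
def targetN (n : ℕ) (A B : ℕ → ℝ) : FS2 := fun k l =>
  if k = l ∧ 2 ≤ k then (A (k - 2) : ℂ)
  else if k = l + n ∧ Even l then (B (l / 2) : ℂ)
  else if l = k + n ∧ Even k then (B (k / 2) : ℂ)
  else 0

/-- The series `(zz̄)³ A(zz̄) + (z³ + z̄³) B(zz̄)`. -/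
def target3 (A B : ℕ → ℝ) : FS2 := fun k l =>
  if k = l ∧ 3 ≤ k then (A (k - 3) : ℂ)
  else if k = l + 3 then (B l : ℂ)
  else if l = k + 3 then (B k : ℂ)
  else 0


/-- `H³_m`: real-valued homogeneous polynomials of degree `m` supported on monomials
`z^k z̄^l` with `k ≡ l (mod 3)`. -/
def H3set (m : ℕ) : Set FS2 :=
  {h | FS2.IsReal h ∧ ∀ k l, h k l ≠ 0 → k + l = m ∧ (k : ZMod 3) = (l : ZMod 3)}

/-- The leading part `h₃ = b₀(z³ + z̄³)`. -/
def h3res (b0 : ℝ) : FS2 := fun k l =>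
  if (k = 3 ∧ l = 0) ∨ (k = 0 ∧ l = 3) then (b0 : ℂ) else 0

/-- The homological operator `L₃(χ) = 2i{χ, h₃}` for the third order resonance. -/
def L3op (b0 : ℝ) (χ : FS2) : FS2 := (2 * Complex.I) • FS2.pb χ (h3res b0)

namespace Homological

open scoped ComplexOrder

/-! ### The operator on coefficients -/

/-- The operator `z̄² ∂/∂z − z² ∂/∂z̄` in terms of coefficients. -/
def D : FS2 →ₗ[ℂ] FS2 where
  toFun χ := fun k l =>
    (if 2 ≤ l then ((k : ℂ) + 1) * χ (k + 1) (l - 2) else 0) -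
      (if 2 ≤ k then ((l : ℂ) + 1) * χ (k - 2) (l + 1) else 0)
  map_add' f g := by
    funext k l
    simp only [Pi.add_apply]
    split_ifs <;> ring
  map_smul' c f := by
    funext k l
    simp only [Pi.smul_apply, smul_eq_mul, RingHom.id_apply]
    split_ifs <;> ring

lemma D_apply (χ : FS2) (k l : ℕ) : D χ k l =
    (if 2 ≤ l then ((k : ℂ) + 1) * χ (k + 1) (l - 2) else 0) -
      (if 2 ≤ k then ((l : ℂ) + 1) * χ (k - 2) (l + 1) else 0) := rfl

lemma mul_mono_left (a b : ℕ) (f : FS2) (k l : ℕ) :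
    FS2.mul (FS2.mono a b) f k l = if a ≤ k ∧ b ≤ l then f (k - a) (l - b) else 0 := by
  unfold FS2.mul FS2.mono
  simp only [ite_mul, one_mul, zero_mul, ite_and]
  simp only [Finset.sum_ite_irrel, Finset.sum_const_zero, Finset.sum_ite_eq',
    Finset.mem_range, Nat.lt_succ_iff]

lemma mul_comm' (f g : FS2) : FS2.mul f g = FS2.mul g f := by
  funext k l
  unfold FS2.mul
  rw [← Finset.sum_range_reflect]
  refine Finset.sum_congr rfl fun p hp => ?_
  rw [← Finset.sum_range_reflect]
  refine Finset.sum_congr rfl fun q hq => ?_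
  rw [Finset.mem_range] at hp hq
  rw [mul_comm]
  congr 2 <;> omega

lemma mul_smul_left (c : ℂ) (f g : FS2) : FS2.mul (c • f) g = c • FS2.mul f g := by
  funext k l
  simp [FS2.mul, Finset.mul_sum, mul_assoc]

lemma mul_add_left (f f' g : FS2) : FS2.mul (f + f') g = FS2.mul f g + FS2.mul f' g := by
  funext k l
  simp [FS2.mul, Finset.sum_add_distrib, add_mul]

lemma h3res_eq (b0 : ℝ) : h3res b0 = (b0 : ℂ) • (FS2.mono 3 0 + FS2.mono 0 3) := by
  funext k l
  simp only [h3res, FS2.mono, Pi.smul_apply, Pi.add_apply, smul_eq_mul]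
  split_ifs <;> first | omega | simp

lemma dz_h3res (b0 : ℝ) : FS2.dz (h3res b0) = (3 * (b0 : ℂ)) • FS2.mono 2 0 := by
  funext k l
  simp only [h3res, FS2.mono, FS2.dz, Pi.smul_apply, smul_eq_mul]
  by_cases h : k = 2 ∧ l = 0
  · obtain ⟨rfl, rfl⟩ := h
    norm_num
  · rw [if_neg (by omega), if_neg h]
    simp

lemma dw_h3res (b0 : ℝ) : FS2.dw (h3res b0) = (3 * (b0 : ℂ)) • FS2.mono 0 2 := by
  funext k l
  simp only [h3res, FS2.mono, FS2.dw, Pi.smul_apply, smul_eq_mul]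
  by_cases h : k = 0 ∧ l = 2
  · obtain ⟨rfl, rfl⟩ := h
    norm_num
  · rw [if_neg (by omega), if_neg h]
    simp

lemma L3op_formula (b0 : ℝ) (χ : FS2) : L3op b0 χ =
    (6 * Complex.I * (b0 : ℂ)) •
      (FS2.mul (FS2.mono 0 2) (FS2.dz χ) - FS2.mul (FS2.mono 2 0) (FS2.dw χ)) := by
  rw [L3op, FS2.pb, dz_h3res, dw_h3res, mul_comm' (FS2.dz χ), mul_comm' (FS2.dw χ),
    mul_smul_left, mul_smul_left, ← smul_sub, smul_smul]
  congr 1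
  ring

lemma L3op_eq (b0 : ℝ) (χ : FS2) : L3op b0 χ = (6 * Complex.I * (b0 : ℂ)) • D χ := by
  rw [L3op_formula]
  congr 1
  funext k l
  simp only [Pi.sub_apply, mul_mono_left, D_apply, FS2.dz, FS2.dw]
  simp

/-! ### Support -/

/-- Complex-valued version of `H3set`: the series of degree `m` supported on `k ≡ l (mod 3)`,
without the reality condition. -/
def HC (m : ℕ) : Submodule ℂ FS2 where
  carrier := {h | ∀ k l, ¬ (k + l = m ∧ k % 3 = l % 3) → h k l = 0}
  add_mem' hf hg := fun k l h => by simp [hf k l h, hg k l h]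
  zero_mem' := fun _ _ _ => rfl
  smul_mem' c f hf := fun k l h => by simp [hf k l h]

lemma mem_H3set {m : ℕ} {h : FS2} : h ∈ H3set m ↔ FS2.IsReal h ∧ h ∈ HC m := by
  refine and_congr_right fun _ => ?_
  change _ ↔ ∀ k l, ¬ (k + l = m ∧ k % 3 = l % 3) → h k l = 0
  simp only [ZMod.natCast_eq_natCast_iff', ← not_imp_comm (b := h _ _ = 0), ne_eq]

lemma D_mem {m : ℕ} {χ : FS2} (h : χ ∈ HC m) : D χ ∈ HC (m + 1) := by
  intro k l hkl
  rw [D_apply]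
  split_ifs with h1 h2 h2
  · rw [h _ _ (by omega), h _ _ (by omega)]; simp
  · rw [h _ _ (by omega)]; simp
  · rw [h _ _ (by omega)]; simp
  · simp

/-! ### Positivity -/

/-- Solving `D χ = g` upwards in the exponent of `z` involves only positive coefficients. -/
lemma nonneg_of_D {χ : FS2} (h0 : ∀ l, χ 0 l = 0) (hD : ∀ k l, 0 ≤ D χ k (l + 2)) :
    ∀ k l, 0 ≤ χ k l := by
  have key : ∀ (k : ℕ) (x : ℂ), 0 ≤ ((k : ℂ) + 1) * x → 0 ≤ x := by
    intro k x hx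
    have hk : (0 : ℝ) < (k : ℝ) + 1 := by positivity
    have hx' : 0 ≤ (((k : ℝ) + 1 : ℝ) : ℂ) * x := by simpa using hx
    rw [Complex.le_def] at hx' ⊢
    rw [Complex.re_ofReal_mul, Complex.im_ofReal_mul] at hx'
    simp only [Complex.zero_re, Complex.zero_im] at hx' ⊢
    exact ⟨nonneg_of_mul_nonneg_right hx'.1 hk,
      ((mul_eq_zero.mp hx'.2.symm).resolve_left hk.ne').symm⟩
  intro k
  induction k using Nat.strong_induction_on with
  | _ k ih =>
    intro l
    rcases k with _ | k
    · exact (h0 l).ge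
    · refine key k _ ?_
      have h := hD k l
      rw [D_apply, if_pos (by omega), Nat.add_sub_cancel] at h
      split_ifs at h with h2
      · refine (sub_nonneg.mp h).trans' (mul_nonneg ?_ (ih _ (by omega) _))
        exact_mod_cast Nat.zero_le (l + 2 + 1)
      · simpa using h

lemma eq_zero_of_D_eq_zero {χ : FS2} (h0 : ∀ l, χ 0 l = 0) (hD : D χ = 0) : χ = 0 := by
  funext k l
  refine le_antisymm ?_ (nonneg_of_D h0 (by simp [hD]) k l)
  have := nonneg_of_D (χ := -χ) (by simp [h0]) (by simp [hD]) k l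
  simpa using this

/-- Exchanging `z` and `z̄` changes the sign of `D`. -/
lemma D_swap (χ : FS2) (k l : ℕ) : D (fun a b => χ b a) k l = - D χ l k := by
  simp only [D_apply]
  ring

lemma eq_zero_of_D_nonneg {m : ℕ} (hm : m % 3 ≠ 0) {χ : FS2} (h : χ ∈ HC m)
    (hD : ∀ k l, 0 ≤ D χ k l) : χ = 0 := by
  funext k l
  refine le_antisymm ?_ (nonneg_of_D (fun l => h _ _ (by omega)) (fun _ _ => hD _ _) k l)
  have := nonneg_of_D (χ := fun a b => (-χ) b a)
    (fun l => by simp [h l 0 (by omega)])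
    (fun k l => by rw [D_swap]; simpa using hD _ _) l k
  simpa using this

/-! ### Solving the equation -/

/-- The solution of `D χ = g` obtained by recursion on the exponent of `z`, starting from
`χ_{0,l} = 0`; it satisfies all the equations except possibly those at `z̄⁰` and `z̄¹`. -/
def sol (g : FS2) : FS2
  | 0 => fun _ => 0
  | 1 => fun l => g 0 (l + 2)
  | 2 => fun l => g 1 (l + 2) / 2
  | n + 3 => fun l => (g (n + 2) (l + 2) + ((l : ℂ) + 3) * sol g n (l + 3)) / ((n : ℂ) + 3)

lemma D_sol (g : FS2) (k l : ℕ) : D (sol g) k (l + 2) = g k (l + 2) := by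
  rw [D_apply, if_pos (by omega), Nat.add_sub_cancel]
  rcases k with _ | _ | n
  · simp [sol]
  · simp only [sol]
    norm_num
    ring
  · have hn : (n : ℂ) + 3 ≠ 0 := by exact_mod_cast (Nat.succ_ne_zero (n + 2))
    rw [if_pos (by omega)]
    simp only [sol, Nat.add_sub_cancel,
      show n + 1 + 1 = n + 2 from rfl, show l + 2 + 1 = l + 3 from rfl]
    push_cast
    rw [show (n : ℂ) + 2 + 1 = n + 3 by ring, mul_div_cancel₀ _ hn]
    ring

lemma sol_mem {m : ℕ} {g : FS2} (hg : g ∈ HC (m + 1)) : sol g ∈ HC m := by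
  intro k
  induction k using Nat.strong_induction_on with
  | _ k ih =>
    intro l h
    rcases k with _ | _ | _ | n
    · rfl
    · exact hg _ _ (by omega)
    · simp [sol, hg 1 (l + 2) (by omega)]
    · simp [sol, hg (n + 2) (l + 2) (by omega), ih n (by omega) (l + 3) (by omega)]

lemma sol_sub_smul (g g' : FS2) (t : ℂ) : sol (g - t • g') = sol g - t • sol g' := by
  funext k
  induction k using Nat.strong_induction_on with
  | _ k ih =>
    funext l
    rcases k with _ | _ | _ | n
    · simp [sol]
    · simp [sol]
    · simp [sol]; ring
    · simp only [sol, ih n (by omega), Pi.sub_apply, Pi.smul_apply, smul_eq_mul]; ring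

lemma residual_eq_zero {m : ℕ} {g : FS2} (hg : g ∈ HC (m + 1)) (k l : ℕ)
    (h : ¬ (k + l = m + 1 ∧ k % 3 = l % 3 ∧ l < 2)) : D (sol g) k l = g k l := by
  by_cases hl : l < 2
  · rw [D_mem (sol_mem hg) k l (by omega), hg k l (by omega)]
  · obtain ⟨l, rfl⟩ := Nat.exists_eq_add_of_le' (not_lt.mp hl)
    exact D_sol g k l

lemma D_surj {m : ℕ} (hm : m % 3 = 0) {g : FS2} (hg : g ∈ HC (m + 1)) :
    ∃ χ ∈ HC m, D χ = g :=
  ⟨sol g, sol_mem hg, by funext k l; exact residual_eq_zero hg k l (by omega)⟩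

/-- Any nonzero element with nonnegative coefficients, together with the image of `D`, spans
`HC (m + 1)`: it is not in the image, and the image has codimension at most one. -/
lemma exists_decomp {m : ℕ} (hm : m % 3 ≠ 0) {g g0 : FS2} (hg : g ∈ HC (m + 1))
    (hg0 : g0 ∈ HC (m + 1)) (hpos : ∀ k l, 0 ≤ g0 k l) (hne : g0 ≠ 0) :
    ∃ χ ∈ HC m, ∃ t : ℂ, g = D χ + t • g0 := by
  -- `(P, Q)` is the exponent of the only equation that `sol` may fail to satisfy.
  obtain ⟨P, Q, hPQ⟩ : ∃ P Q : ℕ, ∀ k l, k + l = m + 1 ∧ k % 3 = l % 3 ∧ l < 2 →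
      k = P ∧ l = Q := by
    by_cases h : m % 3 = 2
    · exact ⟨m + 1, 0, fun k l _ => by omega⟩
    · exact ⟨m, 1, fun k l _ => by omega⟩
  have solve : ∀ f ∈ HC (m + 1), D (sol f) P Q = f P Q → D (sol f) = f := by
    intro f hf h
    funext k l
    by_cases hkl : k + l = m + 1 ∧ k % 3 = l % 3 ∧ l < 2
    · obtain ⟨rfl, rfl⟩ := hPQ k l hkl
      exact h
    · exact residual_eq_zero hf k l hkl
  have h0 : g0 P Q - D (sol g0) P Q ≠ 0 := by
    intro h
    have h1 := solve g0 hg0 (sub_eq_zero.mp h).symm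
    have h2 := eq_zero_of_D_nonneg hm (sol_mem hg0) (by rw [h1]; exact hpos)
    rw [h2, map_zero] at h1
    exact hne h1.symm
  set t := (g P Q - D (sol g) P Q) / (g0 P Q - D (sol g0) P Q) with ht
  have hmem : g - t • g0 ∈ HC (m + 1) := sub_mem hg (Submodule.smul_mem _ _ hg0)
  -- `f ↦ f - D (sol f)` is linear, so `t` makes its value at `(P, Q)` vanish on `g - t • g0`.
  refine ⟨sol (g - t • g0), sol_mem hmem, t, ?_⟩
  rw [solve _ hmem, sub_add_cancel]
  rw [sol_sub_smul, map_sub, map_smul]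
  simp only [Pi.sub_apply, Pi.smul_apply, smul_eq_mul]
  have := div_mul_cancel₀ (g P Q - D (sol g) P Q) h0
  rw [← ht] at this
  linear_combination this

lemma decomp_unique {m : ℕ} (hm : m % 3 ≠ 0) {g0 χ : FS2} (hχ : χ ∈ HC m)
    (hpos : ∀ k l, 0 ≤ g0 k l) (hne : g0 ≠ 0) {t : ℂ} (h : D χ + t • g0 = 0) :
    χ = 0 ∧ t = 0 := by
  have ht : t = 0 := by
    by_contra ht
    have h1 : D (-(t⁻¹ • χ)) = g0 := by
      rw [map_neg, map_smul, eq_neg_of_add_eq_zero_left h, smul_neg, neg_neg, smul_smul,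
        inv_mul_cancel₀ ht, one_smul]
    have h2 := eq_zero_of_D_nonneg hm (neg_mem (Submodule.smul_mem _ t⁻¹ hχ))
      (by rw [h1]; exact hpos)
    rw [h2, map_zero] at h1
    exact hne h1.symm
  refine ⟨eq_zero_of_D_nonneg hm hχ ?_, ht⟩
  rw [ht, zero_smul, add_zero] at h
  simp [h]

/-! ### Conjugation -/

/-- The complex conjugate of a series. -/
def conjS (f : FS2) : FS2 := fun k l => (starRingEnd ℂ) (f l k)

lemma isReal_iff {f : FS2} : FS2.IsReal f ↔ conjS f = f :=
  ⟨fun h => by funext k l; exact (h k l).symm, fun h k l => (congrFun (congrFun h k) l).symm⟩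

lemma conjS_conjS (f : FS2) : conjS (conjS f) = f := by
  funext k l
  simp [conjS]

lemma conjS_add (f g : FS2) : conjS (f + g) = conjS f + conjS g := by
  funext k l
  simp [conjS]

lemma conjS_smul (c : ℂ) (f : FS2) : conjS (c • f) = (starRingEnd ℂ c) • conjS f := by
  funext k l
  simp [conjS]

lemma conjS_mem {m : ℕ} {f : FS2} (h : f ∈ HC m) : conjS f ∈ HC m := by
  intro k l hkl
  simp [conjS, h l k (by omega)]

lemma conjS_D (f : FS2) : D (conjS f) = - conjS (D f) := by
  funext k l
  simp only [Pi.neg_apply, conjS, D_apply, map_sub]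
  split_ifs <;> simp

lemma L3op_conjS (b0 : ℝ) (f : FS2) : L3op b0 (conjS f) = conjS (L3op b0 f) := by
  rw [L3op_eq, L3op_eq, conjS_D, conjS_smul]
  simp [Complex.conj_ofNat]

lemma L3op_lin (b0 : ℝ) (c : ℂ) (f g : FS2) :
    L3op b0 (c • (f + g)) = c • (L3op b0 f + L3op b0 g) := by
  simp only [L3op_eq, map_smul, map_add]
  module

lemma isReal_avg (f : FS2) : FS2.IsReal ((2⁻¹ : ℂ) • (f + conjS f)) := by
  rw [isReal_iff, conjS_smul, conjS_add, conjS_conjS, add_comm]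
  simp [Complex.conj_ofNat]

lemma avg_mem {m : ℕ} {f : FS2} (h : f ∈ HC m) : (2⁻¹ : ℂ) • (f + conjS f) ∈ H3set m :=
  mem_H3set.mpr ⟨isReal_avg f, Submodule.smul_mem _ _ (add_mem h (conjS_mem h))⟩

lemma c_ne {b0 : ℝ} (hb : b0 ≠ 0) : 6 * Complex.I * (b0 : ℂ) ≠ 0 := by
  simp [hb]

lemma L3op_eq_zero {b0 : ℝ} (hb : b0 ≠ 0) (χ : FS2) : L3op b0 χ = 0 ↔ D χ = 0 := by
  rw [L3op_eq, smul_eq_zero_iff_right (c_ne hb)]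

lemma L3op_mem (b0 : ℝ) {m : ℕ} {χ : FS2} (h : χ ∈ H3set m) : L3op b0 χ ∈ H3set (m + 1) := by
  rw [mem_H3set, isReal_iff] at *
  refine ⟨by rw [← L3op_conjS, h.1], ?_⟩
  rw [L3op_eq]
  exact Submodule.smul_mem _ _ (D_mem h.2)

lemma L3op_surj {b0 : ℝ} (hb : b0 ≠ 0) {m : ℕ} (hm : m % 3 = 0) {g : FS2}
    (hg : g ∈ H3set (m + 1)) : ∃ χ ∈ H3set m, L3op b0 χ = g := by
  rw [mem_H3set, isReal_iff] at hg
  obtain ⟨χ, hχ, h⟩ := D_surj hm (Submodule.smul_mem _ (6 * Complex.I * (b0 : ℂ))⁻¹ hg.2)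
  have hL : L3op b0 χ = g := by
    rw [L3op_eq, h, smul_smul, mul_inv_cancel₀ (c_ne hb), one_smul]
  refine ⟨_, avg_mem hχ, ?_⟩
  rw [L3op_lin, L3op_conjS, hL, hg.1]
  module

lemma L3op_decomp {b0 : ℝ} (hb : b0 ≠ 0) {m : ℕ} (hm : m % 3 ≠ 0) {g g0 : FS2}
    (hg : g ∈ H3set (m + 1)) (hg0 : g0 ∈ H3set (m + 1))
    (hpos : ∀ k l, 0 ≤ g0 k l) (hne : g0 ≠ 0) :
    ∃! x : FS2 × ℝ, x.1 ∈ H3set m ∧ g = L3op b0 x.1 + x.2 • g0 := by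
  have hsm : ∀ (t : ℝ) (f : FS2), t • f = (t : ℂ) • f := fun t f => by
    funext k l
    simp
  rw [mem_H3set, isReal_iff] at hg hg0
  obtain ⟨χ, hχ, t, h⟩ := exists_decomp hm hg.2 hg0.2 hpos hne
  set c := 6 * Complex.I * (b0 : ℂ) with hc
  have hL : g = L3op b0 (c⁻¹ • χ) + t • g0 := by
    rw [L3op_eq, map_smul, ← hc, smul_smul, mul_inv_cancel₀ (c_ne hb), one_smul, h]
  have hL' : g = L3op b0 (conjS (c⁻¹ • χ)) + (starRingEnd ℂ t) • g0 := by
    rw [L3op_conjS]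
    conv_lhs => rw [← hg.1, hL, conjS_add, conjS_smul, hg0.1]
  refine existsUnique_of_exists_of_unique
    ⟨((2⁻¹ : ℂ) • (c⁻¹ • χ + conjS (c⁻¹ • χ)), t.re),
      avg_mem (Submodule.smul_mem _ _ hχ), ?_⟩ ?_
  · have ht : (t.re : ℂ) = 2⁻¹ * (t + starRingEnd ℂ t) := by
      rw [Complex.add_conj]
      push_cast
      ring
    simp only [L3op_lin, hsm, ht]
    calc g = (2⁻¹ : ℂ) • (g + g) := by module
      _ = (2⁻¹ : ℂ) • ((L3op b0 (c⁻¹ • χ) + t • g0) +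
            (L3op b0 (conjS (c⁻¹ • χ)) + (starRingEnd ℂ t) • g0)) := by rw [← hL, ← hL']
      _ = _ := by module
  · rintro ⟨f, s⟩ ⟨f', s'⟩ ⟨hf, h1⟩ ⟨hf', h2⟩
    simp only [mem_H3set, hsm, L3op_eq] at hf hf' h1 h2
    have h3 : D (c • (f - f')) + ((s - s' : ℝ) : ℂ) • g0 = 0 := by
      rw [map_smul, map_sub]
      push_cast
      rw [← sub_eq_zero.mpr (h1.symm.trans h2)]
      module
    obtain ⟨h4, h5⟩ := decomp_unique hm
      (Submodule.smul_mem _ c (sub_mem hf.2 hf'.2)) hpos hne h3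
    rw [smul_eq_zero_iff_right (c_ne hb), sub_eq_zero] at h4
    rw [Complex.ofReal_eq_zero, sub_eq_zero] at h5
    rw [h4, h5]

/-! ### Powers of the leading part -/

lemma mul_h3res (b0 : ℝ) (f : FS2) (k l : ℕ) : FS2.mul (h3res b0) f k l =
    (b0 : ℂ) * ((if 3 ≤ k then f (k - 3) l else 0) + (if 3 ≤ l then f k (l - 3) else 0)) := by
  rw [h3res_eq, mul_smul_left, mul_add_left]
  simp [mul_mono_left]

/-- `D` commutes with multiplication by `h₃`, because it is a derivation that annihilates `h₃`. -/
lemma D_mul_h3res (b0 : ℝ) (f : FS2) :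
    D (FS2.mul (h3res b0) f) = FS2.mul (h3res b0) (D f) := by
  funext k l
  rcases k with _ | _ | _ | _ | _ | k <;> rcases l with _ | _ | _ | _ | _ | l <;>
    simp [mul_h3res, D_apply] <;> ring

lemma D_npow (b0 : ℝ) (n : ℕ) : D (FS2.npow (h3res b0) n) = 0 := by
  induction n with
  | zero =>
    funext k l
    simp [FS2.npow, FS2.one, D_apply]
  | succ n ih =>
    rw [FS2.npow, D_mul_h3res, ih]
    funext k l
    simp [mul_h3res]

lemma npow_zero_left (b0 : ℝ) (n l : ℕ) :
    FS2.npow (h3res b0) n 0 l = if l = 3 * n then (b0 : ℂ) ^ n else 0 := by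
  induction n generalizing l with
  | zero => simp [FS2.npow, FS2.one]
  | succ n ih =>
    rw [FS2.npow, mul_h3res, if_neg (by omega), ih]
    split_ifs <;> first | omega | simp [pow_succ']

lemma npow_zero_right (b0 : ℝ) (n l : ℕ) :
    FS2.npow (h3res b0) n l 0 = if l = 3 * n then (b0 : ℂ) ^ n else 0 := by
  induction n generalizing l with
  | zero => simp [FS2.npow, FS2.one]
  | succ n ih =>
    rw [FS2.npow, mul_h3res, ih]
    split_ifs <;> first | omega | simp [pow_succ']

lemma ker_eq {b0 : ℝ} (hb : b0 ≠ 0) (n : ℕ) {χ : FS2} (hχ : χ ∈ H3set (3 * n)) :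
    L3op b0 χ = 0 ↔ ∃ c : ℝ, χ = c • FS2.npow (h3res b0) n := by
  rw [L3op_eq_zero hb]
  have hsm : ∀ t : ℝ, t • FS2.npow (h3res b0) n = (t : ℂ) • FS2.npow (h3res b0) n := fun t => by
    funext k l
    simp
  constructor
  · intro h
    rw [mem_H3set] at hχ
    have hbn : (b0 : ℂ) ^ n ≠ 0 := pow_ne_zero _ (by exact_mod_cast hb)
    set c := χ 0 (3 * n) / (b0 : ℂ) ^ n with hc
    have key : χ - c • FS2.npow (h3res b0) n = 0 := by
      refine eq_zero_of_D_eq_zero (fun l => ?_) (by rw [map_sub, map_smul, h, D_npow]; simp)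
      simp only [Pi.sub_apply, Pi.smul_apply, smul_eq_mul, npow_zero_left]
      split_ifs with hl
      · rw [hl, hc, div_mul_cancel₀ _ hbn, sub_self]
      · rw [hχ.2 0 l (by omega)]
        simp
    rw [sub_eq_zero] at key
    -- The coefficients of `χ` at `zᵐ` and `z̄ᵐ` agree and are conjugate, so `c` is real.
    have h1 : χ (3 * n) 0 = χ 0 (3 * n) := by
      rw [key]
      simp [npow_zero_left, npow_zero_right]
    have h2 : (starRingEnd ℂ) c = c := by
      rw [hc, map_div₀, ← hχ.1, h1, map_pow, Complex.conj_ofReal]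
    obtain ⟨r, hr⟩ := Complex.conj_eq_iff_real.mp h2
    exact ⟨r, by rw [hsm, ← hr, ← key]⟩
  · rintro ⟨c, rfl⟩
    rw [hsm, map_smul, D_npow, smul_zero]

/-! ### The complementary direction -/

/-- The resonant monomial `g` spanning the complement of the image. -/
def gRes (m : ℕ) : FS2 :=
  if Even (m + 1) then FS2.mono ((m + 1) / 2) ((m + 1) / 2)
  else FS2.mono ((m + 4) / 2) ((m - 2) / 2) + FS2.mono ((m - 2) / 2) ((m + 4) / 2)

lemma gRes_mem {m : ℕ} (hm : 2 ≤ m) : gRes m ∈ H3set (m + 1) := by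
  rw [mem_H3set]
  unfold gRes
  split_ifs with h <;> rw [Nat.even_iff] at h
  · constructor
    · intro k l
      simp only [FS2.mono]
      split_ifs <;> first | omega | simp
    · intro k l hkl
      simp only [FS2.mono]
      rw [if_neg (by omega)]
  · constructor
    · intro k l
      simp only [FS2.mono, Pi.add_apply]
      split_ifs <;> first | omega | simp
    · intro k l hkl
      simp only [FS2.mono, Pi.add_apply]
      rw [if_neg (by omega), if_neg (by omega), add_zero]

lemma gRes_nonneg (m k l : ℕ) : 0 ≤ gRes m k l := by
  have h : ∀ a b, 0 ≤ FS2.mono a b k l := fun a b => by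
    unfold FS2.mono
    split_ifs
    · exact zero_le_one
    · exact le_rfl
  unfold gRes
  split_ifs
  · exact h _ _
  · exact add_nonneg (h _ _) (h _ _)

lemma gRes_ne {m : ℕ} : gRes m ≠ 0 := by
  intro h0
  unfold gRes at h0
  split_ifs at h0
  · have := congrFun (congrFun h0 ((m + 1) / 2)) ((m + 1) / 2)
    simp [FS2.mono] at this
  · have := congrFun (congrFun h0 ((m + 4) / 2)) ((m - 2) / 2)
    rw [Pi.add_apply, Pi.add_apply, FS2.mono, FS2.mono, if_pos ⟨rfl, rfl⟩,
      if_neg (by omega)] at this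
    simp at this

end Homological


/-- **The homological operator for the third order resonance.**
`L₃(χ) = 2i{χ,h₃} = 6ib₀(z̄² ∂χ/∂z − z² ∂χ/∂z̄)` maps `H³_m` to `H³_{m+1}`; if
`m = 3k` its kernel is `ℝ·h₃ᵏ` and it is surjective onto `H³_{3k+1}`; if `m ≢ 0 (mod 3)`
it is injective and `H³_{m+1} = L₃(H³_m) ⊕ ℝ·g` with `g = z^{(m+1)/2} z̄^{(m+1)/2}` when
`m+1` is even and `g = z^{(m+4)/2} z̄^{(m−2)/2} + z^{(m−2)/2} z̄^{(m+4)/2}` when `m+1`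
is odd. -/
theorem homological_operator_n3 (b0 : ℝ) (hb : b0 ≠ 0) (m : ℕ) (hm : 2 ≤ m) :
    (∀ χ : FS2, L3op b0 χ =
      (6 * Complex.I * (b0 : ℂ)) •
        (FS2.mul (FS2.mono 0 2) (FS2.dz χ) - FS2.mul (FS2.mono 2 0) (FS2.dw χ))) ∧
    (∀ χ ∈ H3set m, L3op b0 χ ∈ H3set (m + 1)) ∧
    (∀ k : ℕ, m = 3 * k →
      (∀ χ ∈ H3set m, (L3op b0 χ = 0 ↔ ∃ c : ℝ, χ = c • FS2.npow (h3res b0) k)) ∧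
      (∀ g ∈ H3set (m + 1), ∃ χ ∈ H3set m, L3op b0 χ = g)) ∧
    (m % 3 ≠ 0 →
      (∀ χ ∈ H3set m, L3op b0 χ = 0 → χ = 0) ∧
      (∀ g ∈ H3set (m + 1), ∃! x : FS2 × ℝ,
        x.1 ∈ H3set m ∧
        g = L3op b0 x.1 + x.2 •
          (if Even (m + 1) then FS2.mono ((m + 1) / 2) ((m + 1) / 2)
           else FS2.mono ((m + 4) / 2) ((m - 2) / 2) +
                FS2.mono ((m - 2) / 2) ((m + 4) / 2)))) := by
  refine ⟨Homological.L3op_formula b0, fun χ hχ => Homological.L3op_mem b0 hχ, ?_, ?_⟩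
  · rintro k rfl
    exact ⟨fun χ hχ => Homological.ker_eq hb k hχ,
      fun g hg => Homological.L3op_surj hb (by omega) hg⟩
  · intro hm3
    refine ⟨fun χ hχ h => ?_, fun g hg => ?_⟩
    · rw [Homological.L3op_eq_zero hb] at h
      exact Homological.eq_zero_of_D_nonneg hm3 (Homological.mem_H3set.mp hχ).2 (by simp [h])
    · exact Homological.L3op_decomp hb hm3 hg (Homological.gRes_mem hm)
        (Homological.gRes_nonneg m) Homological.gRes_ne

end
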